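/- For every γ ≥ 0, every real p ≥ 3 and every finitely supported real sequence x = (x_i), one has ‖x‖_{ℓ^p} ≤ e^{−γp} ‖x‖_{ℓ^2} + e^{6γ} ‖x‖_{ℓ^∞}, where ‖x‖_{ℓ^p} = (Σ_i |x_i|^p)^{1/p}, ‖x‖_{ℓ^2} = (Σ_i x_i²)^{1/2} and ‖x‖_{ℓ^∞} = max_i |x_i|. -/

import Mathlib

/-!
The Lyapunov inequality gives `‖f‖_p ≤ ‖f‖_2 ^ (2 / p) * ‖f‖_∞ ^ (1 - 2 / p)`. A geometric mean with
weights `s + t = 1` is at most the maximum, also after multiplying `‖f‖_2` by `a` and `‖f‖_∞` by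
`b` as long as `1 ≤ a ^ s * b ^ t`. For `a = e^{-γp}`, `b = e^{6γ}` and `s = 2 / p` this last
product is `e^{4γ(p - 3) / p}`, which is where `3 ≤ p` comes from. A finite sequence is a function
on its index set with the counting measure.
-/

open MeasureTheory ProbabilityTheory Finset
open scoped Classical

/-- `‖X‖_p = (E|X|^p)^{1/p}`. -/
noncomputable def mom {Ω : Type*} [MeasurableSpace Ω] (μ : Measure Ω) (p : ℝ) (X : Ω → ℝ) : ℝ :=
  (∫ ω, |X ω| ^ p ∂μ) ^ (1 / p)

/-- A real random variable is symmetric if `X` and `-X` have the same law. -/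
def IsSymmRV {Ω : Type*} [MeasurableSpace Ω] (μ : Measure Ω) (X : Ω → ℝ) : Prop :=
  μ.map X = μ.map (fun ω => -X ω)

/-- `X` has logarithmically convex tails: `t ↦ -log P(|X| ≥ t)` is convex on `[0,∞)`. -/
def HasLogConvexTails {Ω : Type*} [MeasurableSpace Ω] (μ : Measure Ω) (X : Ω → ℝ) : Prop :=
  ConvexOn ℝ (Set.Ici (0 : ℝ)) (fun t => -Real.log (μ {ω | t ≤ |X ω|}).toReal)

/-- The family of all partitions of `I` into nonempty pairwise disjoint subsets. -/
noncomputable def partitionsOf {d : ℕ} (I : Finset (Fin d)) :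
    Finset (Finset (Finset (Fin d))) :=
  Finset.univ.filter (fun J => (∀ A ∈ J, A.Nonempty) ∧
    (∀ A ∈ J, ∀ B ∈ J, A ≠ B → Disjoint A B) ∧ J.sup id = I)

/-- `‖(a_𝐢)_{𝐢_I}‖_𝒥` where `𝒥 = J` is a partition of `I = J.sup id`, the coordinates of the
multiindex outside `I` being fixed to agree with `z`:  the supremum of
`Σ_{𝐢_I} a_𝐢 ∏_{A ∈ 𝒥} x_A(𝐢_A)` over arrays `x_A` with `Σ_{𝐢_A} x_A(𝐢_A)² ≤ 1`
(an array indexed by `𝐢_A` is encoded as a function of a full multiindex pinned to `0`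
outside `A`). -/
noncomputable def partNorm {n d : ℕ} [NeZero n] (a : (Fin d → Fin n) → ℝ)
    (J : Finset (Finset (Fin d))) (z : Fin d → Fin n) : ℝ :=
  sSup { s : ℝ | ∃ x : Finset (Fin d) → (Fin d → Fin n) → ℝ,
    (∀ A ∈ J, ∑ y ∈ Finset.univ.filter (fun y : Fin d → Fin n => ∀ k, k ∉ A → y k = 0),
        (x A y) ^ 2 ≤ 1) ∧
    s = ∑ i ∈ Finset.univ.filter (fun i : Fin d → Fin n => ∀ k, k ∉ J.sup id → i k = z k),
        a i * ∏ A ∈ J, x A (fun k => if k ∈ A then i k else 0) }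

/-- Multiindices `𝐢_I` (choices of coordinates indexed by `I`), encoded as full multiindices
pinned to `0` outside `I`. -/
noncomputable def tuplesOn {n d : ℕ} [NeZero n] (I : Finset (Fin d)) :
    Finset (Fin d → Fin n) :=
  Finset.univ.filter (fun z => ∀ k, k ∉ I → z k = 0)

open scoped ENNReal

theorem rpow_mul_rpow_le_max {s t : ℝ} (hs : 0 ≤ s) (ht : 0 ≤ t) (hst : s + t = 1) (A B : ℝ≥0∞) :
    A ^ s * B ^ t ≤ max A B :=
  calc A ^ s * B ^ t
      ≤ max A B ^ s * max A B ^ t := by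
        gcongr
        exacts [le_max_left A B, le_max_right A B]
    _ = max A B := by rw [← ENNReal.rpow_add_of_nonneg s t hs ht, hst, ENNReal.rpow_one]

theorem ofReal_exp_rpow (u s : ℝ) :
    ENNReal.ofReal (Real.exp u) ^ s = ENNReal.ofReal (Real.exp (u * s)) := by
  rw [ENNReal.ofReal_rpow_of_pos (Real.exp_pos u), ← Real.exp_mul]

section Interpolation

variable {Ω E : Type*} [MeasurableSpace Ω] [NormedAddCommGroup E] {μ : Measure Ω} {f : Ω → E}
  {p q r : ℝ≥0∞} {s t : ℝ}

-- Hölder's inequality for `‖f‖ = ‖f‖ ^ s * ‖f‖ ^ t` with exponents `p / s` and `q / t`.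
theorem eLpNorm_le_eLpNorm_rpow_mul_eLpNorm_rpow (hf : AEStronglyMeasurable f μ)
    (hs : 0 < s) (ht : 0 < t) (hst : s + t = 1)
    (hr : r⁻¹ = ENNReal.ofReal s / p + ENNReal.ofReal t / q) :
    eLpNorm f r μ ≤ eLpNorm f p μ ^ s * eLpNorm f q μ ^ t := by
  have hs' : ENNReal.ofReal s ≠ 0 := by simpa using hs
  have ht' : ENNReal.ofReal t ≠ 0 := by simpa using ht
  have : ENNReal.HolderTriple (p / ENNReal.ofReal s) (q / ENNReal.ofReal t) r :=
    ⟨by rw [hr, ENNReal.inv_div (.inl ENNReal.ofReal_ne_top) (.inl hs'),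
      ENNReal.inv_div (.inl ENNReal.ofReal_ne_top) (.inl ht')]⟩
  have hsplit (ω : Ω) : ‖f ω‖ = ‖f ω‖ ^ s * ‖f ω‖ ^ t := by
    rw [← Real.rpow_add_of_nonneg (norm_nonneg _) hs.le ht.le, hst, Real.rpow_one]
  have hpow (u : ℝ) : AEStronglyMeasurable (fun ω ↦ ‖f ω‖ ^ u) μ :=
    (hf.norm.aemeasurable.pow_const u).aestronglyMeasurable
  calc eLpNorm f r μ
      = eLpNorm (fun ω ↦ ‖f ω‖ ^ s * ‖f ω‖ ^ t) r μ := by rw [← eLpNorm_norm f, funext hsplit]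
    _ ≤ eLpNorm (fun ω ↦ ‖f ω‖ ^ s) (p / ENNReal.ofReal s) μ *
          eLpNorm (fun ω ↦ ‖f ω‖ ^ t) (q / ENNReal.ofReal t) μ := by
        simpa only [ENNReal.coe_one, one_mul] using
          eLpNorm_le_eLpNorm_mul_eLpNorm'_of_norm (hpow s) (hpow t) (· * ·) 1
            (.of_forall fun ω ↦ by simp)
    _ = eLpNorm f p μ ^ s * eLpNorm f q μ ^ t := by
        rw [eLpNorm_norm_rpow f hs, eLpNorm_norm_rpow f ht,
          ENNReal.div_mul_cancel hs' ENNReal.ofReal_ne_top,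
          ENNReal.div_mul_cancel ht' ENNReal.ofReal_ne_top]

theorem eLpNorm_le_max_mul_eLpNorm (hf : AEStronglyMeasurable f μ)
    (hs : 0 < s) (ht : 0 < t) (hst : s + t = 1)
    (hr : r⁻¹ = ENNReal.ofReal s / p + ENNReal.ofReal t / q)
    {a b : ℝ≥0∞} (hab : 1 ≤ a ^ s * b ^ t) :
    eLpNorm f r μ ≤ max (a * eLpNorm f p μ) (b * eLpNorm f q μ) :=
  calc eLpNorm f r μ
      ≤ eLpNorm f p μ ^ s * eLpNorm f q μ ^ t :=
        eLpNorm_le_eLpNorm_rpow_mul_eLpNorm_rpow hf hs ht hst hr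
    _ ≤ a ^ s * b ^ t * (eLpNorm f p μ ^ s * eLpNorm f q μ ^ t) := le_mul_of_one_le_left' hab
    _ = (a * eLpNorm f p μ) ^ s * (b * eLpNorm f q μ) ^ t := by
        rw [ENNReal.mul_rpow_of_nonneg _ _ hs.le, ENNReal.mul_rpow_of_nonneg _ _ ht.le,
          mul_mul_mul_comm]
    _ ≤ max (a * eLpNorm f p μ) (b * eLpNorm f q μ) := rpow_mul_rpow_le_max hs.le ht.le hst _ _

theorem lp_interpolation_general {γ p : ℝ} (hγ : 0 ≤ γ) (hp : 3 ≤ p)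
    (hf : AEStronglyMeasurable f μ) :
    eLpNorm f (ENNReal.ofReal p) μ ≤
      max (ENNReal.ofReal (Real.exp (-(γ * p))) * eLpNorm f 2 μ)
        (ENNReal.ofReal (Real.exp (6 * γ)) * eLpNorm f ∞ μ) := by
  have hp₀ : 0 < p := by linarith
  have hs : 0 < 2 / p := by positivity
  have ht : 0 < 1 - 2 / p := by rw [sub_pos, div_lt_one hp₀]; linarith
  refine eLpNorm_le_max_mul_eLpNorm hf hs ht (by ring) ?_ ?_
  · rw [ENNReal.div_top, add_zero, ← ENNReal.ofReal_inv_of_pos hp₀, ← ENNReal.ofReal_ofNat 2,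
      ← ENNReal.ofReal_div_of_pos two_pos]
    congr 1
    field_simp
  · have hexp : -(γ * p) * (2 / p) + 6 * γ * (1 - 2 / p) = 4 * γ * (p - 3) / p := by
      field_simp
      ring
    have hexp_nonneg : 0 ≤ 4 * γ * (p - 3) / p :=
      div_nonneg (mul_nonneg (by positivity) (by linarith)) hp₀.le
    rw [ofReal_exp_rpow, ofReal_exp_rpow, ← ENNReal.ofReal_mul (Real.exp_nonneg _),
      ← Real.exp_add, hexp]
    exact ENNReal.one_le_ofReal.2 (Real.one_le_exp hexp_nonneg)

end Interpolation

section CountingMeasure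

variable {ι E : Type*} [MeasurableSpace ι] [MeasurableSingletonClass ι] [NormedAddCommGroup E]

theorem eLpNorm_count_ofReal [Fintype ι] {p : ℝ} (hp : 0 < p) (x : ι → E) :
    eLpNorm x (ENNReal.ofReal p) .count = ENNReal.ofReal ((∑ i, ‖x i‖ ^ p) ^ (1 / p)) := by
  rw [eLpNorm_eq_lintegral_rpow_enorm_toReal (by simpa using hp) ENNReal.ofReal_ne_top,
    lintegral_count, tsum_fintype, ENNReal.toReal_ofReal hp.le,
    ← ENNReal.ofReal_rpow_of_nonneg (by positivity) (by positivity),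
    ENNReal.ofReal_sum_of_nonneg fun i _ ↦ by positivity]
  simp only [← ENNReal.ofReal_rpow_of_nonneg (norm_nonneg _) hp.le, ofReal_norm]

theorem eLpNorm_count_two [Fintype ι] (x : ι → E) :
    eLpNorm x 2 .count = ENNReal.ofReal √(∑ i, ‖x i‖ ^ 2) := by
  rw [← ENNReal.ofReal_ofNat 2, eLpNorm_count_ofReal two_pos, Real.sqrt_eq_rpow]
  simp only [Real.rpow_ofNat]

theorem eLpNorm_count_top {x : ι → E} (hx : BddAbove (Set.range fun i ↦ ‖x i‖)) :
    eLpNorm x ∞ .count = ENNReal.ofReal (⨆ i, ‖x i‖) := by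
  rw [eLpNorm_exponent_top, eLpNormEssSup_count]
  cases isEmpty_or_nonempty ι
  · simp
  · rw [ENNReal.ofReal_mono.map_ciSup_of_continuousAt ENNReal.continuous_ofReal.continuousAt hx]
    simp only [ofReal_norm]

theorem eLpNorm_count_le_max_iff [Fintype ι] {p a b : ℝ} (hp : 0 < p) (ha : 0 ≤ a) (hb : 0 ≤ b)
    (x : ι → E) :
    eLpNorm x (ENNReal.ofReal p) .count ≤
        max (ENNReal.ofReal a * eLpNorm x 2 .count) (ENNReal.ofReal b * eLpNorm x ∞ .count) ↔
      (∑ i, ‖x i‖ ^ p) ^ (1 / p) ≤ max (a * √(∑ i, ‖x i‖ ^ 2)) (b * ⨆ i, ‖x i‖) := by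
  rw [eLpNorm_count_ofReal hp, eLpNorm_count_two, eLpNorm_count_top (Set.finite_range _).bddAbove,
    ← ENNReal.ofReal_mul ha, ← ENNReal.ofReal_mul hb, ← ENNReal.ofReal_max,
    ENNReal.ofReal_le_ofReal_iff (le_max_of_le_left (by positivity))]

end CountingMeasure

/-- The interpolation inequality from Remark 3:
`‖x‖_{ℓ^p} ≤ e^{-γp} ‖x‖_{ℓ^2} + e^{6γ} ‖x‖_{ℓ^∞}` for `p ≥ 3` and `γ ≥ 0`. -/
theorem lp_interpolation (γ : ℝ) (hγ : 0 ≤ γ) (p : ℝ) (hp : 3 ≤ p)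
    (ι : Type) [Fintype ι] [Nonempty ι] (x : ι → ℝ) :
    (∑ i, |x i| ^ p) ^ (1 / p) ≤
      Real.exp (-(γ * p)) * Real.sqrt (∑ i, (x i) ^ 2) +
        Real.exp (6 * γ) * ⨆ i, |x i| := by
  let _ : MeasurableSpace ι := ⊤
  have hsup : 0 ≤ ⨆ i, ‖x i‖ := Real.iSup_nonneg fun i ↦ norm_nonneg (x i)
  have hmax := (eLpNorm_count_le_max_iff (by linarith) (Real.exp_nonneg _) (Real.exp_nonneg _) x).1
    (lp_interpolation_general hγ hp measurable_from_top.aestronglyMeasurable)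
  simpa only [Real.norm_eq_abs, sq_abs] using
    hmax.trans (max_le_add_of_nonneg (by positivity) (by positivity))
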